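/- Let α be an alphabet and consider words over the disjoint union α ⊕ α, where Sum.inl gives the 'unprimed' copy and Sum.inr the 'primed' copy. Let A = {[inl a₁, inr a₁, inl a₂, inr a₂, …, inl a_k, inr a_k] | k ≥ 0, a₁,…,a_k ∈ α} be the language of alternating unprimed/primed words with matching letters. Then for all languages L₁, L₂ ⊆ α*: A ∩ ((List.map Sum.inl of L₁) ⧢ (List.map Sum.inr of L₂)) = ∅ if and only if L₁ ∩ L₂ = ∅. -/

import Mathlib

/-- `IsShuffle u v w` holds iff `w` is an interleaving of `u` and `v`,
i.e. `w = u₁v₁u₂v₂⋯uₙvₙ` for some decompositions `u = u₁⋯uₙ`, `v = v₁⋯vₙ`. -/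
inductive IsShuffle {α : Type*} : List α → List α → List α → Prop
  | nil : IsShuffle [] [] []
  | left {a : α} {u v w : List α} : IsShuffle u v w → IsShuffle (a :: u) v (a :: w)
  | right {a : α} {u v w : List α} : IsShuffle u v w → IsShuffle u (a :: v) (a :: w)

/-- The shuffle `u ⧢ v` of two words, as a set of words. -/
def wordShuffle {α : Type*} (u v : List α) : Set (List α) := {w | IsShuffle u v w}

/-- The shuffle of two languages. -/
def langShuffle {α : Type*} (L₁ L₂ : Set (List α)) : Set (List α) :=
  ⋃ u ∈ L₁, ⋃ v ∈ L₂, wordShuffle u v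

/-!
The letters of `u.map Sum.inl` and `v.map Sum.inr` come from disjoint alphabets, so they can be told
apart in any shuffle of the two: `w` is such a shuffle iff its unprimed letters spell `u` and its
primed letters spell `v`. In a word of `A` both spell the same word `l`, so that word is a
shuffle of members of the two languages iff `l ∈ L₁ ∩ L₂`.
-/

theorem isShuffle_map_inl_map_inr_iff {α β : Type*} {u : List α} {v : List β}
    {w : List (α ⊕ β)} :
    IsShuffle (u.map Sum.inl) (v.map Sum.inr) w ↔
      w.filterMap Sum.getLeft? = u ∧ w.filterMap Sum.getRight? = v := by
  constructor
  · intro h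
    generalize hu : u.map Sum.inl = u', hv : v.map Sum.inr = v' at h
    induction h generalizing u v with
    | nil => simp_all
    | left _ ih =>
      obtain ⟨a, u, rfl, rfl, rfl⟩ := List.map_eq_cons_iff.mp hu
      simpa [List.filterMap_cons] using ih rfl hv
    | right _ ih =>
      obtain ⟨b, v, rfl, rfl, rfl⟩ := List.map_eq_cons_iff.mp hv
      simpa [List.filterMap_cons] using ih hu rfl
  · rintro ⟨rfl, rfl⟩
    induction w with
    | nil => exact .nil
    | cons c w ih =>
      cases c with
      | inl a => exact ih.left
      | inr b => exact ih.right

theorem mem_langShuffle {α : Type*} {L₁ L₂ : Set (List α)} {w : List α} :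
    w ∈ langShuffle L₁ L₂ ↔ ∃ u ∈ L₁, ∃ v ∈ L₂, IsShuffle u v w := by
  simp only [langShuffle, wordShuffle, Set.mem_iUnion, Set.mem_ofPred_eq, exists_prop]

theorem mem_langShuffle_image_inl_image_inr {α β : Type*} {L₁ : Set (List α)}
    {L₂ : Set (List β)} {w : List (α ⊕ β)} :
    w ∈ langShuffle (List.map Sum.inl '' L₁) (List.map Sum.inr '' L₂) ↔
      w.filterMap Sum.getLeft? ∈ L₁ ∧ w.filterMap Sum.getRight? ∈ L₂ := by
  simp [mem_langShuffle, isShuffle_map_inl_map_inr_iff]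

theorem filterMap_getLeft?_flatMap_inl_inr {ι α β : Type*} (f : ι → α) (g : ι → β) (l : List ι) :
    (l.flatMap fun i => [Sum.inl (f i), Sum.inr (g i)]).filterMap Sum.getLeft? = l.map f := by
  simp [List.filterMap_flatMap, List.filterMap_cons, List.map_eq_flatMap]

theorem filterMap_getRight?_flatMap_inl_inr {ι α β : Type*} (f : ι → α) (g : ι → β) (l : List ι) :
    (l.flatMap fun i => [Sum.inl (f i), Sum.inr (g i)]).filterMap Sum.getRight? = l.map g := by
  simp [List.filterMap_flatMap, List.filterMap_cons, List.map_eq_flatMap]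

/-- with `A` the language of alternating unprimed/primed words with
matching letters over `α ⊕ α`,
`A ∩ ((inl L₁) ⧢ (inr L₂)) = ∅ ↔ L₁ ∩ L₂ = ∅`. -/
theorem stmt_7 {α : Type*} (L₁ L₂ : Set (List α)) :
    ({w : List (α ⊕ α) | ∃ l : List α,
        w = l.flatMap (fun a => [Sum.inl a, Sum.inr a])} ∩
      langShuffle {w : List (α ⊕ α) | ∃ x ∈ L₁, w = x.map Sum.inl}
        {w : List (α ⊕ α) | ∃ x ∈ L₂, w = x.map Sum.inr} = ∅) ↔
    L₁ ∩ L₂ = ∅ := by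
  have image_eq (f : α → α ⊕ α) (L : Set (List α)) :
      {w | ∃ x ∈ L, w = x.map f} = List.map f '' L :=
    Set.ext fun _ => by simp only [Set.mem_ofPred_eq, Set.mem_image, eq_comm]
  have mem_shuffle_iff (l : List α) :
      (l.flatMap fun a => [Sum.inl a, Sum.inr a]) ∈
        langShuffle (List.map Sum.inl '' L₁) (List.map Sum.inr '' L₂) ↔ l ∈ L₁ ∩ L₂ := by
    rw [mem_langShuffle_image_inl_image_inr, filterMap_getLeft?_flatMap_inl_inr (fun a => a),
      filterMap_getRight?_flatMap_inl_inr _ (fun a => a), List.map_id', Set.mem_inter_iff]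
  rw [image_eq, image_eq, Set.eq_empty_iff_forall_notMem, Set.eq_empty_iff_forall_notMem]
  constructor
  · exact fun h l hl => h _ ⟨⟨l, rfl⟩, (mem_shuffle_iff l).mpr hl⟩
  · rintro h _ ⟨⟨l, rfl⟩, hw⟩
    exact h l ((mem_shuffle_iff l).mp hw)
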